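/- Suppose L is symmetric (L y y' = L y' y for all y, y'). If the Max-Margin loss S_M is consistent to L (Fisher consistent under some decoding), then the Restricted-Max-Margin loss S_RM is also consistent to L (Fisher consistent under some decoding). -/

import Mathlib

open Finset Set

variable {Y : Type*} [Fintype Y] [DecidableEq Y] [Nonempty Y]

/-- Probability simplex over `Y`. -/
def simplexSet (Y : Type*) [Fintype Y] : Set (Y → ℝ) :=
  {q | (∀ y, 0 ≤ q y) ∧ ∑ y, q y = 1}

/-- Bayes risk of the discrete loss `L`. -/
noncomputable def HL (L : Y → Y → ℝ) (q : Y → ℝ) : ℝ :=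
  ⨅ y : Y, ∑ y', L y y' * q y'

/-- Optimal-label set. -/
noncomputable def ystar (L : Y → Y → ℝ) (q : Y → ℝ) : Set Y :=
  {y | ∑ y', L y y' * q y' = HL L q}

/-- Prediction set of label `y`. -/
noncomputable def predSet (L : Y → Y → ℝ) (y : Y) : Set (Y → ℝ) :=
  {q ∈ simplexSet Y | y ∈ ystar L q}

/-- Max-Margin loss. -/
noncomputable def SM (L : Y → Y → ℝ) (v : Y → ℝ) (y : Y) : ℝ :=
  ⨆ y' : Y, (L y y' + v y' - v y)

/-- Bayes risk of the Max-Margin loss. -/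
noncomputable def HM (L : Y → Y → ℝ) (q : Y → ℝ) : ℝ :=
  ⨅ v : Y → ℝ, ∑ y, q y * SM L v y

/-- Conditional-risk minimizers of the Max-Margin loss. -/
noncomputable def vstarM (L : Y → Y → ℝ) (q : Y → ℝ) : Set (Y → ℝ) :=
  {v | ∑ y, q y * SM L v y = HM L q}

/-- Restricted-Max-Margin loss. -/
noncomputable def SRM (L : Y → Y → ℝ) (v : Y → ℝ) (y : Y) : ℝ :=
  sSup ((fun q => ∑ y', L y y' * q y' + ∑ z, v z * q z) '' predSet L y) - v y

/-- Bayes risk of the Restricted-Max-Margin loss. -/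
noncomputable def HRM (L : Y → Y → ℝ) (q : Y → ℝ) : ℝ :=
  ⨅ v : Y → ℝ, ∑ y, q y * SRM L v y

/-- Conditional-risk minimizers of the Restricted-Max-Margin loss. -/
noncomputable def vstarRM (L : Y → Y → ℝ) (q : Y → ℝ) : Set (Y → ℝ) :=
  {v | ∑ y, q y * SRM L v y = HRM L q}

/-- Max-Min-Margin loss. -/
noncomputable def SMM (L : Y → Y → ℝ) (v : Y → ℝ) (y : Y) : ℝ :=
  sSup ((fun q => (⨅ z : Y, ∑ y', L z y' * q y') + ∑ z, v z * q z) '' simplexSet Y) - v y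

/-- Bayes risk of the Max-Min-Margin loss. -/
noncomputable def HMM (L : Y → Y → ℝ) (q : Y → ℝ) : ℝ :=
  ⨅ v : Y → ℝ, ∑ y, q y * SMM L v y

/-- Transportation polytope `U(q, q)`. -/
def Upoly (q : Y → ℝ) : Set (Y → Y → ℝ) :=
  {Q | (∀ y y', 0 ≤ Q y y') ∧ (∀ y, ∑ y', Q y y' = q y) ∧ (∀ y', ∑ y, Q y y' = q y')}

/-- The constraint set `C_L`. -/
def CL (L : Y → Y → ℝ) : Set (Y → Y → ℝ) :=
  {Q | ∀ y z : Y, ∑ y', L y y' * Q y y' ≤ ∑ y', L z y' * Q y y'}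

set_option linter.unusedSectionVars false

/-- Scores dominating the loss on every pair: the dual feasible set of the Max-Margin loss
for a symmetric `L`. -/
def Feasible (L : Y → Y → ℝ) (u : Y → ℝ) : Prop :=
  ∀ a b, L a b ≤ u a + u b

/-- The uniform distribution on the (possibly equal) labels `a`, `b`. -/
noncomputable def pairDist (a b : Y) : Y → ℝ :=
  Pi.single a (1 / 2) + Pi.single b (1 / 2)

theorem sum_mul_pairDist (f : Y → ℝ) (a b : Y) :
    ∑ y, f y * pairDist a b y = (f a + f b) / 2 := by
  simp [pairDist, mul_add, Finset.sum_add_distrib, Pi.single_apply]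
  ring

theorem pairDist_mem_simplexSet (a b : Y) : pairDist a b ∈ simplexSet Y := by
  refine ⟨fun y => ?_, ?_⟩
  · simp only [pairDist, Pi.add_apply, Pi.single_apply]
    split_ifs <;> norm_num
  · have := sum_mul_pairDist (fun _ => (1 : ℝ)) a b
    simp only [one_mul] at this
    rw [this]; norm_num

theorem HL_le (L : Y → Y → ℝ) (q : Y → ℝ) (y : Y) : HL L q ≤ ∑ y', L y y' * q y' :=
  ciInf_le (Set.finite_range _).bddBelow y

theorem exists_mem_ystar (L : Y → Y → ℝ) (q : Y → ℝ) : ∃ y, y ∈ ystar L q :=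
  exists_eq_ciInf_of_finite (f := fun y => ∑ y', L y y' * q y')

theorem mem_ystar_iff (L : Y → Y → ℝ) (q : Y → ℝ) (y : Y) :
    y ∈ ystar L q ↔ ∀ w, ∑ y', L y y' * q y' ≤ ∑ y', L w y' * q y' := by
  constructor
  · intro h w
    have h' : ∑ y', L y y' * q y' = HL L q := h
    exact h'.trans_le (HL_le L q w)
  · intro h
    exact le_antisymm (le_ciInf h) (HL_le L q y)

theorem pairDist_mem_ystar_iff (L : Y → Y → ℝ) (a b y : Y) :
    y ∈ ystar L (pairDist a b) ↔ ∀ w, L y a + L y b ≤ L w a + L w b := by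
  simp only [mem_ystar_iff, sum_mul_pairDist]
  exact forall_congr' fun w => by constructor <;> intro h <;> linarith

theorem le_SM (L : Y → Y → ℝ) (v : Y → ℝ) (y y' : Y) : L y y' + v y' - v y ≤ SM L v y :=
  le_ciSup (f := fun y' => L y y' + v y' - v y) (Set.finite_range _).bddAbove y'

theorem feasible_half_SM {L : Y → Y → ℝ} (hsymm : ∀ y y', L y y' = L y' y) (v : Y → ℝ) :
    Feasible L fun y => SM L v y / 2 := by
  intro a b
  have h1 := le_SM L v a b
  have h2 := le_SM L v b a
  have h3 := hsymm a b
  linarith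

theorem SM_neg_le {L : Y → Y → ℝ} {u : Y → ℝ} (hu : Feasible L u) (y : Y) :
    SM L (-u) y ≤ 2 * u y := by
  refine ciSup_le fun y' => ?_
  have := hu y y'
  simp only [Pi.neg_apply]
  linarith

/-- A feasible `u` yields a minimizer `-u` of the Max-Margin risk at the midpoint of each of its
tight pairs. -/
theorem neg_mem_vstarM {L : Y → Y → ℝ} (hsymm : ∀ y y', L y y' = L y' y) {u : Y → ℝ}
    (hu : Feasible L u) {a b : Y} (hab : u a + u b = L a b) :
    -u ∈ vstarM L (pairDist a b) := by
  have key : ∀ v, L a b ≤ ∑ y, pairDist a b y * SM L v y := by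
    intro v
    simp only [mul_comm (pairDist a b _), sum_mul_pairDist]
    have := feasible_half_SM hsymm v a b
    linarith
  have hle : ∑ y, pairDist a b y * SM L (-u) y ≤ L a b := by
    simp only [mul_comm (pairDist a b _), sum_mul_pairDist]
    linarith [SM_neg_le hu a, SM_neg_le hu b]
  refine le_antisymm (hle.trans (le_ciInf key)) ?_
  exact ciInf_le ⟨L a b, by rintro _ ⟨v, rfl⟩; exact key v⟩ (-u)

/-- Consistency of Max-Margin gives each feasible `u` a label optimal at the midpoints of all its
tight pairs. -/
theorem exists_label_of_tight {L : Y → Y → ℝ} (hsymm : ∀ y y', L y y' = L y' y)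
    (hconsM : ∃ d : (Y → ℝ) → Y, ∀ q ∈ simplexSet Y, ∀ v ∈ vstarM L q, d v ∈ ystar L q)
    {u : Y → ℝ} (hu : Feasible L u) :
    ∃ z, ∀ a b, u a + u b = L a b → ∀ w, L z a + L z b ≤ L w a + L w b := by
  obtain ⟨d, hd⟩ := hconsM
  refine ⟨d (-u), fun a b hab => (pairDist_mem_ystar_iff L a b _).1 ?_⟩
  exact hd _ (pairDist_mem_simplexSet a b) _ (neg_mem_vstarM hsymm hu hab)

theorem le_sum_sum {L : Y → Y → ℝ} (hnonneg : ∀ y y', 0 ≤ L y y') (a b : Y) :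
    L a b ≤ ∑ y, ∑ y', L y y' :=
  (Finset.single_le_sum (f := L a) (fun y' _ => hnonneg a y') (Finset.mem_univ b)).trans
    (Finset.single_le_sum (f := fun y => ∑ y', L y y')
      (fun y _ => Finset.sum_nonneg fun y' _ => hnonneg y y') (Finset.mem_univ a))

theorem triangle_of_consistent {L : Y → Y → ℝ} (hnonneg : ∀ y y', 0 ≤ L y y')
    (hzero : ∀ y y', L y y' = 0 ↔ y = y') (hsymm : ∀ y y', L y y' = L y' y)
    (hconsM : ∃ d : (Y → ℝ) → Y, ∀ q ∈ simplexSet Y, ∀ v ∈ vstarM L q, d v ∈ ystar L q)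
    (a b w : Y) : L a b ≤ L w a + L w b := by
  have hself : ∀ y, L y y = 0 := fun y => (hzero y y).2 rfl
  rcases eq_or_ne b a with rfl | hba
  · rw [hself]; linarith [hnonneg w b]
  set M := ∑ y, ∑ y', L y y'
  have hM : ∀ y y', L y y' ≤ M := le_sum_sum hnonneg
  have hM0 : 0 ≤ M := (hnonneg a b).trans (hM a b)
  let u : Y → ℝ := fun y => if y = a then 0 else if y = b then L a b else M
  have hua : u a = 0 := by simp [u]
  have hub : u b = L a b := by simp [u, hba]
  have hother : ∀ y, y ≠ a → y ≠ b → u y = M := fun y h1 h2 => by simp [u, h1, h2]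
  have hu0 : ∀ y, 0 ≤ u y := fun y => by
    simp only [u]; split_ifs <;> simp [hnonneg, hM0]
  have hu : Feasible L u := by
    intro x y
    by_cases hx : x ≠ a ∧ x ≠ b
    · linarith [hother x hx.1 hx.2, hM x y, hu0 y]
    by_cases hy : y ≠ a ∧ y ≠ b
    · linarith [hother y hy.1 hy.2, hM x y, hu0 x]
    have hx' : x = a ∨ x = b := by tauto
    have hy' : y = a ∨ y = b := by tauto
    rcases hx' with hx' | hx' <;> rcases hy' with hy' | hy' <;> rw [hx', hy']
    · linarith [hself a]
    · linarith
    · linarith [hsymm a b]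
    · linarith [hself b, hu0 b]
  obtain ⟨z, hz⟩ := exists_label_of_tight hsymm hconsM hu
  have hza : z = a := by
    rw [← hzero]
    have := hz a a (by rw [hua, hself, add_zero]) a
    linarith [hself a, hnonneg z a]
  subst hza
  have := hz z b (by rw [hua, hub, zero_add]) w
  linarith [hself z]

theorem exists_feasible_minimizer {L : Y → Y → ℝ} (hnonneg : ∀ y y', 0 ≤ L y y')
    {q : Y → ℝ} (hq : q ∈ simplexSet Y) :
    ∃ u, Feasible L u ∧ ∀ u', Feasible L u' → ∑ y, u y * q y ≤ ∑ y, u' y * q y := by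
  set M := ∑ y, ∑ y', L y y'
  have hM : ∀ y y', L y y' ≤ M := le_sum_sum hnonneg
  have hM0 : 0 ≤ M := Finset.sum_nonneg fun y _ => Finset.sum_nonneg fun y' _ => hnonneg y y'
  have nonneg_of_feasible : ∀ u, Feasible L u → ∀ y, 0 ≤ u y := fun u hu y => by
    linarith [hu y y, hnonneg y y]
  have hcompact : IsCompact (Set.Icc (0 : Y → ℝ) (fun _ => M) ∩ {u | Feasible L u}) := by
    refine isCompact_Icc.inter_right ?_
    simp only [Feasible, Set.ofPred_forall]
    exact isClosed_iInter fun a => isClosed_iInter fun b =>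
      isClosed_le continuous_const (by fun_prop)
  have hne : (Set.Icc (0 : Y → ℝ) (fun _ => M) ∩ {u | Feasible L u}).Nonempty :=
    ⟨fun _ => M, ⟨fun _ => hM0, le_rfl⟩, fun a b => by linarith [hM a b]⟩
  obtain ⟨u, hu, hmin⟩ := hcompact.exists_isMinOn hne
    (f := fun u : Y → ℝ => ∑ y, u y * q y) (by fun_prop)
  refine ⟨u, hu.2, fun u' hu' => ?_⟩
  have hmem : (fun y => min (u' y) M) ∈
      Set.Icc (0 : Y → ℝ) (fun _ => M) ∩ {u | Feasible L u} := by
    have h0 := nonneg_of_feasible u' hu'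
    refine ⟨⟨fun y => le_min (h0 y) hM0, fun y => min_le_right _ _⟩, fun a b => ?_⟩
    have h1 := hM a b
    have h2 := hu' a b
    rcases min_cases (u' a) M with h | h <;> rcases min_cases (u' b) M with h' | h' <;>
      linarith [h0 a, h0 b]
  refine (isMinOn_iff.1 hmin _ hmem).trans (Finset.sum_le_sum fun y _ => ?_)
  exact mul_le_mul_of_nonneg_right (min_le_left _ _) (hq.1 y)

/-- Under consistency of Max-Margin, feasible scores have conditional risk at least the
Bayes risk of `L`. -/
theorem HL_le_of_feasible {L : Y → Y → ℝ} (hnonneg : ∀ y y', 0 ≤ L y y')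
    (hzero : ∀ y y', L y y' = 0 ↔ y = y') (hsymm : ∀ y y', L y y' = L y' y)
    (hconsM : ∃ d : (Y → ℝ) → Y, ∀ q ∈ simplexSet Y, ∀ v ∈ vstarM L q, d v ∈ ystar L q)
    {q : Y → ℝ} (hq : q ∈ simplexSet Y) {u' : Y → ℝ} (hu' : Feasible L u') :
    HL L q ≤ ∑ y, u' y * q y := by
  obtain ⟨u, hu, hmin⟩ := exists_feasible_minimizer hnonneg hq
  refine le_trans ?_ (hmin u' hu')
  obtain ⟨z, hz⟩ := exists_label_of_tight hsymm hconsM hu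
  refine (HL_le L q z).trans ?_
  -- moving `u` away from `L z` preserves feasibility for small steps, tight pairs staying tight
  have hsmall : ∀ᶠ t : ℝ in nhdsWithin 0 (Set.Ioi 0),
      ∀ a b, L a b ≤ u a + u b + t * (u a + u b - (L z a + L z b)) := by
    refine Filter.eventually_all.2 fun a => Filter.eventually_all.2 fun b => ?_
    rcases (hu a b).eq_or_lt with hab | hab
    · filter_upwards [self_mem_nhdsWithin] with t (ht : 0 < t)
      have h1 := hz a b hab.symm a
      rw [(hzero a a).2 rfl] at h1
      have : 0 ≤ t * (u a + u b - (L z a + L z b)) := mul_nonneg ht.le (by linarith)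
      linarith
    · have hcont : Continuous fun t : ℝ => u a + u b + t * (u a + u b - (L z a + L z b)) := by
        fun_prop
      have h0 := hcont.tendsto 0
      simp only [zero_mul, add_zero] at h0
      filter_upwards [(h0.mono_left nhdsWithin_le_nhds).eventually (lt_mem_nhds hab)] with t ht
      exact ht.le
  obtain ⟨t, ht, htpos⟩ := (hsmall.and self_mem_nhdsWithin).exists
  have hfeas : Feasible L fun y => u y + t * (u y - L z y) := fun a b => by
    linarith [ht a b]
  have h1 := hmin _ hfeas
  have h2 : ∑ y, (u y + t * (u y - L z y)) * q y
      = ∑ y, u y * q y + t * (∑ y, u y * q y - ∑ y, L z y * q y) := by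
    rw [← Finset.sum_sub_distrib, Finset.mul_sum, ← Finset.sum_add_distrib]
    exact Finset.sum_congr rfl fun y _ => by ring
  have h3 : 0 ≤ t * (∑ y, u y * q y - ∑ y, L z y * q y) := by linarith
  linarith [nonneg_of_mul_nonneg_right h3 htpos]

theorem bddAbove_image_predSet (L : Y → Y → ℝ) (v : Y → ℝ) (y : Y) :
    BddAbove ((fun q => ∑ y', L y y' * q y' + ∑ z, v z * q z) '' predSet L y) := by
  have hsub : predSet L y ⊆ Set.Icc (0 : Y → ℝ) 1 := by
    rintro q ⟨⟨h0, h1⟩, -⟩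
    refine ⟨h0, fun y' => ?_⟩
    rw [Pi.one_apply, ← h1]
    exact Finset.single_le_sum (fun i _ => h0 i) (Finset.mem_univ y')
  refine BddAbove.mono (Set.image_mono hsub) ?_
  exact (isCompact_Icc.image (by fun_prop)).bddAbove

theorem pairDist_mem_predSet {L : Y → Y → ℝ} (hself : ∀ y, L y y = 0)
    (htri : ∀ a b w, L a b ≤ L w a + L w b) (a b : Y) : pairDist a b ∈ predSet L a := by
  refine ⟨pairDist_mem_simplexSet a b, (pairDist_mem_ystar_iff L a b a).2 fun w => ?_⟩
  linarith [hself a, htri a b w]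

theorem half_SM_le_SRM {L : Y → Y → ℝ} (hself : ∀ y, L y y = 0)
    (htri : ∀ a b w, L a b ≤ L w a + L w b) (v : Y → ℝ) (y : Y) :
    SM L v y / 2 ≤ SRM L v y := by
  suffices SM L v y ≤ 2 * SRM L v y by linarith
  refine ciSup_le fun y' => ?_
  have h := le_csSup (bddAbove_image_predSet L v y)
    (Set.mem_image_of_mem _ (pairDist_mem_predSet hself htri y y'))
  simp only [sum_mul_pairDist] at h
  simp only [SRM]
  linarith [hself y]

theorem SRM_neg_le {L : Y → Y → ℝ} (hself : ∀ y, L y y = 0)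
    (htri : ∀ a b w, L a b ≤ L w a + L w b) (z y : Y) :
    SRM L (-(L z)) y ≤ L z y := by
  have : sSup ((fun q => ∑ y', L y y' * q y' + ∑ x, (-(L z)) x * q x) '' predSet L y) ≤ 0 := by
    refine csSup_le ⟨_, Set.mem_image_of_mem _ (pairDist_mem_predSet hself htri y y)⟩ ?_
    rintro _ ⟨q, hq, rfl⟩
    have := (mem_ystar_iff L q y).1 hq.2 z
    simp only [Pi.neg_apply, neg_mul, Finset.sum_neg_distrib]
    linarith
  simp only [SRM, Pi.neg_apply] at this ⊢
  linarith

/-- A loss whose conditional risk dominates the Bayes risk of `L` can be decoded wherever the two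
agree. -/
theorem exists_decoding_of_HL_le (L : Y → Y → ℝ) (S : (Y → ℝ) → Y → ℝ)
    (hS : ∀ q ∈ simplexSet Y, ∀ v, HL L q ≤ ∑ y, q y * S v y) :
    ∃ d : (Y → ℝ) → Y, ∀ q ∈ simplexSet Y, ∀ v,
      ∑ y, q y * S v y = HL L q → d v ∈ ystar L q := by
  suffices ∀ v, ∃ z, ∀ q ∈ simplexSet Y, ∑ y, q y * S v y = HL L q → z ∈ ystar L q by
    choose d hd using this
    exact ⟨d, fun q hq v => hd v q hq⟩
  intro v
  by_contra! hbad
  choose p hp hrisk hnot using hbad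
  have hlin : ∀ f : Y → ℝ, ∑ y, f y * (∑ i, p i y) = ∑ i, ∑ y, f y * p i y := fun f => by
    simp only [Finset.mul_sum]
    exact Finset.sum_comm
  -- the barycentre of the counterexamples
  set n : ℝ := (Fintype.card Y : ℝ)
  have hn : 0 < n := Nat.cast_pos.2 Fintype.card_pos
  let r : Y → ℝ := fun y => n⁻¹ * ∑ i, p i y
  have hr_sum : ∀ f : Y → ℝ, ∑ y, f y * r y = n⁻¹ * ∑ i, ∑ y, f y * p i y := fun f => by
    rw [← hlin, Finset.mul_sum]
    exact Finset.sum_congr rfl fun y _ => by simp only [r]; ring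
  have hr : r ∈ simplexSet Y := by
    refine ⟨fun y => mul_nonneg (inv_nonneg.2 hn.le)
      (Finset.sum_nonneg fun i _ => (hp i).1 y), ?_⟩
    have := hr_sum fun _ => 1
    simp only [one_mul, (hp _).2] at this
    rw [this]
    simp only [Finset.sum_const, Finset.card_univ, nsmul_eq_mul, mul_one]
    exact inv_mul_cancel₀ hn.ne'
  obtain ⟨z, hz⟩ := exists_mem_ystar L r
  have h1 : ∑ y, L z y * r y ≤ ∑ y, S v y * r y := by
    have h : ∑ y', L z y' * r y' = HL L r := hz
    rw [h]
    simpa only [mul_comm] using hS r hr v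
  rw [hr_sum, hr_sum] at h1
  have h2 : ∑ i, ∑ y, L z y * p i y ≤ ∑ i, HL L (p i) := by
    have h := le_of_mul_le_mul_left h1 (inv_pos.2 hn)
    simpa only [mul_comm (S v _), hrisk] using h
  have h3 : ∑ i, HL L (p i) < ∑ i, ∑ y, L z y * p i y :=
    Finset.sum_lt_sum (fun i _ => HL_le L (p i) z)
      ⟨z, Finset.mem_univ z, lt_of_le_of_ne (HL_le L (p z) z) fun h => hnot z h.symm⟩
  exact absurd h2 h3.not_ge

theorem stmt5 (Y : Type*) [Fintype Y] [DecidableEq Y] [Nonempty Y] (L : Y → Y → ℝ)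
    (hcard : 2 ≤ Fintype.card Y)
    (hnonneg : ∀ y y', 0 ≤ L y y')
    (hzero : ∀ y y', L y y' = 0 ↔ y = y')
    (hsymm : ∀ y y', L y y' = L y' y)
    (hconsM : ∃ d : (Y → ℝ) → Y, ∀ q ∈ simplexSet Y, ∀ v ∈ vstarM L q, d v ∈ ystar L q) :
    ∃ d : (Y → ℝ) → Y, ∀ q ∈ simplexSet Y, ∀ v ∈ vstarRM L q, d v ∈ ystar L q := by
  have hself : ∀ y, L y y = 0 := fun y => (hzero y y).2 rfl
  have htri := triangle_of_consistent hnonneg hzero hsymm hconsM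
  have hlow : ∀ q ∈ simplexSet Y, ∀ v, HL L q ≤ ∑ y, q y * SRM L v y := by
    intro q hq v
    refine (HL_le_of_feasible hnonneg hzero hsymm hconsM hq (feasible_half_SM hsymm v)).trans ?_
    refine Finset.sum_le_sum fun y _ => ?_
    rw [mul_comm]
    exact mul_le_mul_of_nonneg_left (half_SM_le_SRM hself htri v y) (hq.1 y)
  obtain ⟨d, hd⟩ := exists_decoding_of_HL_le L (SRM L) hlow
  refine ⟨d, fun q hq v hv => hd q hq v (le_antisymm ?_ (hlow q hq v))⟩
  have hv' : ∑ y, q y * SRM L v y = HRM L q := hv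
  rw [hv']
  obtain ⟨z, hz⟩ := exists_mem_ystar L q
  have hz' : ∑ y', L z y' * q y' = HL L q := hz
  rw [← hz']
  refine (ciInf_le ⟨HL L q, by rintro _ ⟨v, rfl⟩; exact hlow q hq v⟩ (-(L z))).trans ?_
  refine Finset.sum_le_sum fun y _ => ?_
  rw [mul_comm (L z y)]
  exact mul_le_mul_of_nonneg_left (SRM_neg_le hself htri z y) (hq.1 y)
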